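/- arXiv:2006.06849 — 7 statements merged into one kernel-verified Lean document; each statement's English description precedes it below -/
import Mathlib

section
/- For all α₁, α₂, α₃, α₄ ∈ (0, π) with tan(α₃/2)·tan(α₄/2) ≠ 1, writing tᵢ = tan(αᵢ/2), the equation (t₂ − t₁)/(t₂ + t₁) = (1 + t₃t₄)/(1 − t₃t₄) has no solution, and the equation (t₂ − t₁)/(t₂ + t₁) = −(1 + t₃t₄)/(1 − t₃t₄) has no solution. -/
open Real

/-!
The two sides are separated by their absolute values: `|a - b| < |a + b|` whenever `0 < a * b`.
For `a = t₂`, `b = t₁` this puts the left-hand side strictly inside `(-1, 1)`, and for `a = 1`,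
`b = t₃ t₄` it puts the right-hand side strictly outside `[-1, 1]`.
-/

theorem abs_sub_lt_abs_add_iff {R : Type*} [CommRing R] [LinearOrder R] [IsStrictOrderedRing R]
    {a b : R} : |a - b| < |a + b| ↔ 0 < a * b := by
  have h : (a + b) ^ 2 - (a - b) ^ 2 = 4 * (a * b) := by ring
  rw [← sq_lt_sq, ← sub_pos, h, mul_pos_iff_of_pos_left four_pos]

section Field

variable {K : Type*} [Field K] [LinearOrder K] [IsStrictOrderedRing K]

theorem abs_sub_div_add_lt_one {a b : K} (hab : 0 < a * b) : |(a - b) / (a + b)| < 1 := by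
  have h : |a - b| < |a + b| := abs_sub_lt_abs_add_iff.mpr hab
  rw [abs_div]
  exact (div_lt_one ((abs_nonneg _).trans_lt h)).mpr h

theorem one_lt_abs_add_div_sub {a b : K} (hab : 0 < a * b) (hne : a ≠ b) :
    1 < |(a + b) / (a - b)| := by
  rw [abs_div]
  exact (one_lt_div (abs_sub_pos.mpr hne)).mpr (abs_sub_lt_abs_add_iff.mpr hab)

theorem stmt1_general {t₁ t₂ t₃ t₄ : K} (h₁₂ : 0 < t₁ * t₂) (h₃₄ : 0 < t₃ * t₄)
    (hne : t₃ * t₄ ≠ 1) :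
    (t₂ - t₁) / (t₂ + t₁) ≠ (1 + t₃ * t₄) / (1 - t₃ * t₄) ∧
      (t₂ - t₁) / (t₂ + t₁) ≠ -((1 + t₃ * t₄) / (1 - t₃ * t₄)) := by
  have left_lt : |(t₂ - t₁) / (t₂ + t₁)| < 1 := abs_sub_div_add_lt_one (mul_comm t₁ t₂ ▸ h₁₂)
  have lt_right : 1 < |(1 + t₃ * t₄) / (1 - t₃ * t₄)| :=
    one_lt_abs_add_div_sub (by rwa [one_mul]) hne.symm
  have h := (left_lt.trans lt_right).ne
  exact ⟨fun heq => h (abs_eq_abs.mpr (.inl heq)), fun heq => h (abs_eq_abs.mpr (.inr heq))⟩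

end Field

theorem tan_half_pos {α : ℝ} (hα : α ∈ Set.Ioo 0 π) : 0 < tan (α / 2) :=
  tan_pos_of_pos_of_lt_pi_div_two (half_pos hα.1) (div_lt_div_of_pos_right hα.2 two_pos)

theorem stmt1 (α₁ α₂ α₃ α₄ : ℝ)
    (h₁ : α₁ ∈ Set.Ioo 0 π) (h₂ : α₂ ∈ Set.Ioo 0 π)
    (h₃ : α₃ ∈ Set.Ioo 0 π) (h₄ : α₄ ∈ Set.Ioo 0 π)
    (hne : Real.tan (α₃ / 2) * Real.tan (α₄ / 2) ≠ 1) :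
    (Real.tan (α₂ / 2) - Real.tan (α₁ / 2)) / (Real.tan (α₂ / 2) + Real.tan (α₁ / 2)) ≠
      (1 + Real.tan (α₃ / 2) * Real.tan (α₄ / 2)) / (1 - Real.tan (α₃ / 2) * Real.tan (α₄ / 2)) ∧
    (Real.tan (α₂ / 2) - Real.tan (α₁ / 2)) / (Real.tan (α₂ / 2) + Real.tan (α₁ / 2)) ≠
      -((1 + Real.tan (α₃ / 2) * Real.tan (α₄ / 2)) / (1 - Real.tan (α₃ / 2) * Real.tan (α₄ / 2))) :=
  stmt1_general (mul_pos (tan_half_pos h₁) (tan_half_pos h₂))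
    (mul_pos (tan_half_pos h₃) (tan_half_pos h₄)) hne
end

section
/- For all α₁, α₂, α₃, α₄ ∈ (0, π) with α₃ + α₄ ≠ π: |sin((α₂ − α₁)/2)/sin((α₂ + α₁)/2)| < 1 and |cos((α₄ − α₃)/2)/cos((α₄ + α₃)/2)| > 1. Consequently sin((α₂ − α₁)/2)/sin((α₂ + α₁)/2) ≠ ± cos((α₄ − α₃)/2)/cos((α₄ + α₃)/2). -/
open Real

/-!
For all angles `a` and `b`,
`sin ((b + a) / 2) ^ 2 - sin ((b - a) / 2) ^ 2 = sin a * sin b`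
`  = cos ((b - a) / 2) ^ 2 - cos ((b + a) / 2) ^ 2`.
So the sign of `sin a * sin b` alone decides both comparisons: when it is positive, passing from
the half difference to the half sum increases `|sin|` and decreases `|cos|`, which puts the two
ratios on opposite sides of `1` in absolute value.
-/

theorem cos_half_sub_sq_sub_cos_half_add_sq (a b : ℝ) :
    cos ((b - a) / 2) ^ 2 - cos ((b + a) / 2) ^ 2 = sin a * sin b := by
  have hsub : 2 * ((b - a) / 2) = b - a := by ring
  have hadd : 2 * ((b + a) / 2) = b + a := by ring
  rw [cos_sq, cos_sq, hsub, hadd, cos_sub, cos_add]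
  ring

theorem sin_half_add_sq_sub_sin_half_sub_sq (a b : ℝ) :
    sin ((b + a) / 2) ^ 2 - sin ((b - a) / 2) ^ 2 = sin a * sin b := by
  rw [sin_sq, sin_sq, sub_sub_sub_cancel_left, cos_half_sub_sq_sub_cos_half_add_sq]

section HalfAngles

variable {a b x : ℝ}

theorem abs_sin_half_sub_lt_abs_sin_half_add_iff :
    |sin ((b - a) / 2)| < |sin ((b + a) / 2)| ↔ 0 < sin a * sin b := by
  rw [← sq_lt_sq, ← sub_pos, sin_half_add_sq_sub_sin_half_sub_sq]

theorem abs_cos_half_add_lt_abs_cos_half_sub_iff :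
    |cos ((b + a) / 2)| < |cos ((b - a) / 2)| ↔ 0 < sin a * sin b := by
  rw [← sq_lt_sq, ← sub_pos, cos_half_sub_sq_sub_cos_half_add_sq]

theorem abs_sin_half_sub_div_sin_half_add_lt_one (h : 0 < sin a * sin b) :
    |sin ((b - a) / 2) / sin ((b + a) / 2)| < 1 := by
  have hlt := abs_sin_half_sub_lt_abs_sin_half_add_iff.mpr h
  rwa [abs_div, div_lt_one ((abs_nonneg _).trans_lt hlt)]

theorem one_lt_abs_cos_half_sub_div_cos_half_add (h : 0 < sin a * sin b)
    (hcos : cos ((b + a) / 2) ≠ 0) :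
    1 < |cos ((b - a) / 2) / cos ((b + a) / 2)| := by
  rw [abs_div, one_lt_div (abs_pos.mpr hcos)]
  exact abs_cos_half_add_lt_abs_cos_half_sub_iff.mpr h

theorem cos_half_eq_zero_iff_of_mem_Icc (hx : x ∈ Set.Icc 0 (2 * π)) :
    cos (x / 2) = 0 ↔ x = π := by
  have hx' : x / 2 ∈ Set.Icc 0 π := ⟨by linarith [hx.1], by linarith [hx.2]⟩
  have hpi : π / 2 ∈ Set.Icc 0 π := ⟨by positivity, half_le_self pi_nonneg⟩
  rw [← cos_pi_div_two, injOn_cos.eq_iff hx' hpi, div_left_inj' two_ne_zero]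

theorem sin_mul_sin_pos_of_mem_Ioo (ha : a ∈ Set.Ioo 0 π) (hb : b ∈ Set.Ioo 0 π) :
    0 < sin a * sin b :=
  mul_pos (sin_pos_of_mem_Ioo ha) (sin_pos_of_mem_Ioo hb)

theorem cos_half_add_eq_zero_iff_of_mem_Icc (ha : a ∈ Set.Icc 0 π) (hb : b ∈ Set.Icc 0 π) :
    cos ((b + a) / 2) = 0 ↔ a + b = π := by
  have hmem : b + a ∈ Set.Icc 0 (2 * π) :=
    ⟨add_nonneg hb.1 ha.1, by linarith [ha.2, hb.2]⟩
  rw [cos_half_eq_zero_iff_of_mem_Icc hmem, add_comm]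

end HalfAngles

theorem stmt6_general (α₁ α₂ α₃ α₄ : ℝ)
    (h₁₂ : 0 < sin α₁ * sin α₂) (h₃₄ : 0 < sin α₃ * sin α₄)
    (hcos : cos ((α₄ + α₃) / 2) ≠ 0) :
    |sin ((α₂ - α₁) / 2) / sin ((α₂ + α₁) / 2)| < 1 ∧
    |cos ((α₄ - α₃) / 2) / cos ((α₄ + α₃) / 2)| > 1 ∧
    sin ((α₂ - α₁) / 2) / sin ((α₂ + α₁) / 2) ≠
      cos ((α₄ - α₃) / 2) / cos ((α₄ + α₃) / 2) ∧
    sin ((α₂ - α₁) / 2) / sin ((α₂ + α₁) / 2) ≠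
      -(cos ((α₄ - α₃) / 2) / cos ((α₄ + α₃) / 2)) := by
  have hsin_lt := abs_sin_half_sub_div_sin_half_add_lt_one h₁₂
  have hcos_gt := one_lt_abs_cos_half_sub_div_cos_half_add h₃₄ hcos
  have habs_ne := (hsin_lt.trans hcos_gt).ne
  exact ⟨hsin_lt, hcos_gt, not_or.mp (mt abs_eq_abs.mpr habs_ne)⟩

theorem stmt6 (α₁ α₂ α₃ α₄ : ℝ)
    (h₁ : α₁ ∈ Set.Ioo 0 π) (h₂ : α₂ ∈ Set.Ioo 0 π)
    (h₃ : α₃ ∈ Set.Ioo 0 π) (h₄ : α₄ ∈ Set.Ioo 0 π)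
    (hne : α₃ + α₄ ≠ π) :
    |Real.sin ((α₂ - α₁) / 2) / Real.sin ((α₂ + α₁) / 2)| < 1 ∧
    |Real.cos ((α₄ - α₃) / 2) / Real.cos ((α₄ + α₃) / 2)| > 1 ∧
    Real.sin ((α₂ - α₁) / 2) / Real.sin ((α₂ + α₁) / 2) ≠
      Real.cos ((α₄ - α₃) / 2) / Real.cos ((α₄ + α₃) / 2) ∧
    Real.sin ((α₂ - α₁) / 2) / Real.sin ((α₂ + α₁) / 2) ≠
      -(Real.cos ((α₄ - α₃) / 2) / Real.cos ((α₄ + α₃) / 2)) := by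
  have hcos := (cos_half_add_eq_zero_iff_of_mem_Icc
    (Set.Ioo_subset_Icc_self h₃) (Set.Ioo_subset_Icc_self h₄)).not.mpr hne
  exact stmt6_general α₁ α₂ α₃ α₄
    (sin_mul_sin_pos_of_mem_Ioo h₁ h₂) (sin_mul_sin_pos_of_mem_Ioo h₃ h₄) hcos
end

section
/- For all α₁, α₂, α₃, α₄ ∈ (0, π) with α₁ + α₂ ≠ π and α₃ + α₄ ≠ π, writing tᵢ = tan(αᵢ/2): the equation cos((α₂ − α₁)/2)/cos((α₂ + α₁)/2) = ± cos((α₄ − α₃)/2)/cos((α₄ + α₃)/2) (i.e., equality holds with one of the two signs) is satisfied if and only if t₁t₂ = t₃t₄ or t₁t₂t₃t₄ = 1. -/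
open Real

/-!
Dividing the addition formulas for `cos (x ∓ y)` by `cos x * cos y` gives
`cos (x - y) / cos (x + y) = (1 + p) / (1 - p)` with `p = tan x * tan y`. The Möbius map
`m p = (1 + p) / (1 - p)` of the projective line is injective and satisfies `-m q = m (1 / q)`, so
`m p = ± m q` says that `p = q` or `p * q = 1`.
-/

section Field

variable {K : Type*} [Field K] [NeZero (2 : K)] {p q : K}

theorem one_add_div_one_sub_inj (hp : 1 - p ≠ 0) (hq : 1 - q ≠ 0) :
    (1 + p) / (1 - p) = (1 + q) / (1 - q) ↔ p = q := by
  have cross_sub : (1 + p) * (1 - q) - (1 + q) * (1 - p) = 2 * (p - q) := by ring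
  rw [div_eq_div_iff hp hq, ← sub_eq_zero, cross_sub, mul_eq_zero_iff_left two_ne_zero,
    sub_eq_zero]

theorem one_add_div_one_sub_eq_neg_iff (hp : 1 - p ≠ 0) (hq : 1 - q ≠ 0) :
    (1 + p) / (1 - p) = -((1 + q) / (1 - q)) ↔ p * q = 1 := by
  have cross_sub : (1 + p) * (1 - q) - -(1 + q) * (1 - p) = 2 * (1 - p * q) := by ring
  rw [← neg_div, div_eq_div_iff hp hq, ← sub_eq_zero, cross_sub,
    mul_eq_zero_iff_left two_ne_zero, sub_eq_zero, eq_comm]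

end Field

section ComplexAngles

variable {x y : ℂ}

theorem cos_add_eq_mul_one_sub_tan_mul_tan (hx : Complex.cos x ≠ 0) (hy : Complex.cos y ≠ 0) :
    Complex.cos (x + y) =
      Complex.cos x * Complex.cos y * (1 - Complex.tan x * Complex.tan y) := by
  rw [Complex.cos_add, ← Complex.tan_mul_cos hx, ← Complex.tan_mul_cos hy]
  ring

theorem cos_sub_eq_mul_one_add_tan_mul_tan (hx : Complex.cos x ≠ 0) (hy : Complex.cos y ≠ 0) :
    Complex.cos (x - y) =
      Complex.cos x * Complex.cos y * (1 + Complex.tan x * Complex.tan y) := by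
  rw [Complex.cos_sub, ← Complex.tan_mul_cos hx, ← Complex.tan_mul_cos hy]
  ring

theorem cos_sub_div_cos_add (hx : Complex.cos x ≠ 0) (hy : Complex.cos y ≠ 0) :
    Complex.cos (x - y) / Complex.cos (x + y) =
      (1 + Complex.tan x * Complex.tan y) / (1 - Complex.tan x * Complex.tan y) := by
  rw [cos_sub_eq_mul_one_add_tan_mul_tan hx hy, cos_add_eq_mul_one_sub_tan_mul_tan hx hy,
    mul_div_mul_left _ _ (mul_ne_zero hx hy)]

theorem one_sub_tan_mul_tan_ne_zero (hx : Complex.cos x ≠ 0) (hy : Complex.cos y ≠ 0)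
    (hxy : Complex.cos (x + y) ≠ 0) : 1 - Complex.tan x * Complex.tan y ≠ 0 :=
  right_ne_zero_of_mul (cos_add_eq_mul_one_sub_tan_mul_tan hx hy ▸ hxy)

theorem stmt8_general {α₁ α₂ α₃ α₄ : ℂ}
    (h₁ : Complex.cos (α₁ / 2) ≠ 0) (h₂ : Complex.cos (α₂ / 2) ≠ 0)
    (h₃ : Complex.cos (α₃ / 2) ≠ 0) (h₄ : Complex.cos (α₄ / 2) ≠ 0)
    (h12 : Complex.cos ((α₂ + α₁) / 2) ≠ 0) (h34 : Complex.cos ((α₄ + α₃) / 2) ≠ 0) :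
    (Complex.cos ((α₂ - α₁) / 2) / Complex.cos ((α₂ + α₁) / 2) =
        Complex.cos ((α₄ - α₃) / 2) / Complex.cos ((α₄ + α₃) / 2) ∨
      Complex.cos ((α₂ - α₁) / 2) / Complex.cos ((α₂ + α₁) / 2) =
        -(Complex.cos ((α₄ - α₃) / 2) / Complex.cos ((α₄ + α₃) / 2))) ↔
    (Complex.tan (α₁ / 2) * Complex.tan (α₂ / 2) =
        Complex.tan (α₃ / 2) * Complex.tan (α₄ / 2) ∨
      Complex.tan (α₁ / 2) * Complex.tan (α₂ / 2) * Complex.tan (α₃ / 2) *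
        Complex.tan (α₄ / 2) = 1) := by
  simp only [sub_div, add_div] at h12 h34 ⊢
  have hp := one_sub_tan_mul_tan_ne_zero h₂ h₁ h12
  have hq := one_sub_tan_mul_tan_ne_zero h₄ h₃ h34
  rw [cos_sub_div_cos_add h₂ h₁, cos_sub_div_cos_add h₄ h₃,
    one_add_div_one_sub_inj hp hq, one_add_div_one_sub_eq_neg_iff hp hq,
    mul_comm (Complex.tan (α₂ / 2)), mul_comm (Complex.tan (α₄ / 2)), ← mul_assoc]

end ComplexAngles

section RealAngles

theorem cos_half_eq_zero_iff {θ : ℝ} (hθ : θ ∈ Set.Ioo (-π) (3 * π)) :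
    Real.cos (θ / 2) = 0 ↔ θ = π := by
  obtain ⟨hθ_gt, hθ_lt⟩ := hθ
  rw [← Real.sin_pi_div_two_sub,
    Real.sin_eq_zero_iff_of_lt_of_lt (by linarith) (by linarith), sub_eq_zero,
    div_left_inj' two_ne_zero, eq_comm]

variable {α β : ℝ}

theorem cos_half_ne_zero (hα : α ∈ Set.Ioo 0 π) : Real.cos (α / 2) ≠ 0 :=
  (cos_half_eq_zero_iff ⟨by linarith [hα.1, hα.2], by linarith [hα.1, hα.2]⟩).not.mpr hα.2.ne

theorem cos_half_add_ne_zero (hα : α ∈ Set.Ioo 0 π) (hβ : β ∈ Set.Ioo 0 π) (hαβ : α + β ≠ π) :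
    Real.cos ((β + α) / 2) ≠ 0 := by
  obtain ⟨hα_pos, hα_lt⟩ := hα
  obtain ⟨hβ_pos, hβ_lt⟩ := hβ
  rw [add_comm β α, Ne, cos_half_eq_zero_iff ⟨by linarith, by linarith⟩]
  exact hαβ

end RealAngles

theorem stmt8 (α₁ α₂ α₃ α₄ : ℝ)
    (h₁ : α₁ ∈ Set.Ioo 0 π) (h₂ : α₂ ∈ Set.Ioo 0 π)
    (h₃ : α₃ ∈ Set.Ioo 0 π) (h₄ : α₄ ∈ Set.Ioo 0 π)
    (h12 : α₁ + α₂ ≠ π) (h34 : α₃ + α₄ ≠ π) :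
    (Real.cos ((α₂ - α₁) / 2) / Real.cos ((α₂ + α₁) / 2) =
        Real.cos ((α₄ - α₃) / 2) / Real.cos ((α₄ + α₃) / 2) ∨
     Real.cos ((α₂ - α₁) / 2) / Real.cos ((α₂ + α₁) / 2) =
        -(Real.cos ((α₄ - α₃) / 2) / Real.cos ((α₄ + α₃) / 2))) ↔
    (Real.tan (α₁ / 2) * Real.tan (α₂ / 2) = Real.tan (α₃ / 2) * Real.tan (α₄ / 2) ∨
     Real.tan (α₁ / 2) * Real.tan (α₂ / 2) * Real.tan (α₃ / 2) * Real.tan (α₄ / 2) = 1) := by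
  exact_mod_cast stmt8_general (α₁ := α₁) (α₂ := α₂) (α₃ := α₃) (α₄ := α₄)
    (mod_cast cos_half_ne_zero h₁) (mod_cast cos_half_ne_zero h₂)
    (mod_cast cos_half_ne_zero h₃) (mod_cast cos_half_ne_zero h₄)
    (mod_cast cos_half_add_ne_zero h₁ h₂ h12) (mod_cast cos_half_add_ne_zero h₃ h₄ h34)
end

section
/- For all α₁, α₂, α₃, α₄ ∈ (0, π), the set { ρ₁ ∈ [0, π] : −1 ≤ (cos α₃ cos α₄ − cos ξ(ρ₁))/(sin α₃ sin α₄) ≤ 1 }, where ξ(ρ₁) = arccos(cos α₁ cos α₂ − sin α₁ sin α₂ cos ρ₁), is order-connected (an interval); it is moreover closed. -/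
/-!
By the spherical law of cosines `cos ξ` is an affine function of `cos ρ₁`. The expression for
`cos ρ₃` lies in `[-1, 1]` exactly when `cos ξ` lies between `cos (α₃ + α₄)` and `cos (α₃ - α₄)`,
which encodes the triangle inequalities for a spherical triangle with sides `α₃`, `α₄`, `ξ`.
Preimages of intervals under affine functions and under `cos` restricted to `[0, π]` are intervals,
so the admissible `ρ₁` form one; it is closed because `cos ξ` is continuous in `ρ₁`.
-/

open Real

theorem uIcc_sub_add_eq_Icc_abs {G : Type*} [AddCommGroup G] [LinearOrder G]
    [IsOrderedAddMonoid G] (c r : G) :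
    Set.uIcc (c - r) (c + r) = Set.Icc (c - |r|) (c + |r|) := by
  rcases abs_cases r with ⟨habs, hr⟩ | ⟨habs, hr⟩
  · rw [habs, Set.uIcc_of_le ((sub_le_self c hr).trans (le_add_of_nonneg_right hr))]
  · rw [habs, sub_neg_eq_add, ← sub_eq_add_neg, Set.uIcc_of_ge]
    exact (add_le_of_nonpos_right hr.le).trans ((le_sub_self_iff c).mpr hr.le)

theorem ordConnected_preimage_sub_mul {R : Type*} [Ring R] [LinearOrder R] [IsOrderedRing R]
    {s : Set R} (hs : s.OrdConnected) (c k : R) :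
    ((fun x ↦ c - k * x) ⁻¹' s).OrdConnected := by
  rcases le_total 0 k with hk | hk
  · exact hs.preimage_anti fun x y hxy ↦ sub_le_sub_left (mul_le_mul_of_nonneg_left hxy hk) c
  · exact hs.preimage_mono fun x y hxy ↦ sub_le_sub_left (mul_le_mul_of_nonpos_left hxy hk) c

theorem abs_cos_mul_cos_sub_le_iff_mem_uIcc (α β x : ℝ) :
    |cos α * cos β - x| ≤ |sin α * sin β| ↔ x ∈ Set.uIcc (cos (α + β)) (cos (α - β)) := by
  rw [cos_add, cos_sub, uIcc_sub_add_eq_Icc_abs, Set.mem_Icc_iff_abs_le]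

theorem cos_mul_cos_sub_div_mem_Icc_iff_mem_uIcc {α β : ℝ} (hα : sin α ≠ 0) (hβ : sin β ≠ 0)
    (x : ℝ) :
    (cos α * cos β - x) / (sin α * sin β) ∈ Set.Icc (-1) 1 ↔
      x ∈ Set.uIcc (cos (α + β)) (cos (α - β)) := by
  rw [Set.mem_Icc, ← abs_le, abs_div, div_le_one (abs_pos.mpr (mul_ne_zero hα hβ)),
    abs_cos_mul_cos_sub_le_iff_mem_uIcc]

theorem cos_mul_cos_sub_sin_mul_sin_mul_cos_mem_Icc (α β ρ : ℝ) :
    cos α * cos β - sin α * sin β * cos ρ ∈ Set.Icc (-1) 1 := by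
  have between : cos α * cos β - sin α * sin β * cos ρ ∈
      Set.uIcc (cos (α + β)) (cos (α - β)) := by
    rw [← abs_cos_mul_cos_sub_le_iff_mem_uIcc, sub_sub_cancel, abs_mul]
    exact mul_le_of_le_one_right (abs_nonneg _) (abs_cos_le_one ρ)
  exact Set.uIcc_subset_Icc (cos_mem_Icc _) (cos_mem_Icc _) between

/-- The length `ξ` of the diagonal closing two consecutive arcs of lengths `α` and `β` on the unit
sphere, by the spherical law of cosines. Here `ρ` is the folding angle at the common endpoint: the
interior angle of the spherical triangle is `π - ρ`, whence the minus sign. -/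
noncomputable def sphericalDiagonal (α β ρ : ℝ) : ℝ :=
  arccos (cos α * cos β - sin α * sin β * cos ρ)

theorem cos_sphericalDiagonal (α β ρ : ℝ) :
    cos (sphericalDiagonal α β ρ) = cos α * cos β - sin α * sin β * cos ρ :=
  have h := cos_mul_cos_sub_sin_mul_sin_mul_cos_mem_Icc α β ρ
  cos_arccos h.1 h.2

theorem ordConnected_Icc_inter_preimage_cos_sphericalDiagonal {s : Set ℝ} (hs : s.OrdConnected)
    (α β : ℝ) :
    (Set.Icc 0 π ∩ (fun ρ ↦ cos (sphericalDiagonal α β ρ)) ⁻¹' s).OrdConnected := by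
  simp only [cos_sphericalDiagonal]
  obtain ⟨u, hu, preimage_eq⟩ :=
    (ordConnected_preimage_sub_mul hs (cos α * cos β) (sin α * sin β)).preimage_antitoneOn
      strictAntiOn_cos.antitoneOn
  exact preimage_eq ▸ Set.ordConnected_Icc.inter hu

theorem continuous_cos_sphericalDiagonal (α β : ℝ) :
    Continuous fun ρ ↦ cos (sphericalDiagonal α β ρ) := by
  simp only [cos_sphericalDiagonal]
  fun_prop

theorem stmt11_general (α₁ α₂ : ℝ) {α₃ α₄ : ℝ} (h₃ : sin α₃ ≠ 0) (h₄ : sin α₄ ≠ 0) :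
    let S : Set ℝ := {ρ₁ | ρ₁ ∈ Set.Icc 0 π ∧
      (cos α₃ * cos α₄ - cos (sphericalDiagonal α₁ α₂ ρ₁)) / (sin α₃ * sin α₄) ∈ Set.Icc (-1) 1}
    S.OrdConnected ∧ IsClosed S := by
  simp only [cos_mul_cos_sub_div_mem_Icc_iff_mem_uIcc h₃ h₄]
  exact ⟨ordConnected_Icc_inter_preimage_cos_sphericalDiagonal Set.ordConnected_uIcc α₁ α₂,
    isClosed_Icc.inter (isClosed_Icc.preimage (continuous_cos_sphericalDiagonal α₁ α₂))⟩

theorem stmt11 (α₁ α₂ α₃ α₄ : ℝ)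
    (h₁ : α₁ ∈ Set.Ioo 0 π) (h₂ : α₂ ∈ Set.Ioo 0 π)
    (h₃ : α₃ ∈ Set.Ioo 0 π) (h₄ : α₄ ∈ Set.Ioo 0 π) :
    let ξ : ℝ → ℝ := fun ρ₁ =>
      Real.arccos (Real.cos α₁ * Real.cos α₂ - Real.sin α₁ * Real.sin α₂ * Real.cos ρ₁)
    let S : Set ℝ := {ρ₁ | ρ₁ ∈ Set.Icc 0 π ∧
      -1 ≤ (Real.cos α₃ * Real.cos α₄ - Real.cos (ξ ρ₁)) / (Real.sin α₃ * Real.sin α₄) ∧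
      (Real.cos α₃ * Real.cos α₄ - Real.cos (ξ ρ₁)) / (Real.sin α₃ * Real.sin α₄) ≤ 1}
    S.OrdConnected ∧ IsClosed S :=
  stmt11_general α₁ α₂ (sin_pos_of_mem_Ioo h₃).ne' (sin_pos_of_mem_Ioo h₄).ne'
end

section
/- For all α₁, α₂, α₃, α₄ ∈ (0, π), the function ρ₁ ↦ arccos((cos α₃ cos α₄ − cos ξ(ρ₁))/(sin α₃ sin α₄)), where ξ(ρ₁) = arccos(cos α₁ cos α₂ − sin α₁ sin α₂ cos ρ₁), is strictly increasing on any subinterval of [0, π] on which its arccos argument lies in [−1, 1]. -/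
open Real

/-- The value of `cos ρ₃` in terms of `ρ = ρ₁`, from the law of cosines in the triangle with sides
`α₃`, `α₄` and the diagonal. It is the cosine of an actual angle only where it lies in `[-1, 1]`. -/
noncomputable def cosOppositeFold (α₁ α₂ α₃ α₄ ρ : ℝ) : ℝ :=
  (cos α₃ * cos α₄ - cos (sphericalDiagonal α₁ α₂ ρ)) / (sin α₃ * sin α₄)

theorem cosOppositeFold_eq_add_mul_cos (α₁ α₂ α₃ α₄ ρ : ℝ) :
    cosOppositeFold α₁ α₂ α₃ α₄ ρ =
      (cos α₃ * cos α₄ - cos α₁ * cos α₂) / (sin α₃ * sin α₄) +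
        sin α₁ * sin α₂ / (sin α₃ * sin α₄) * cos ρ := by
  rw [cosOppositeFold, cos_sphericalDiagonal]
  ring

theorem strictAntiOn_cosOppositeFold {α₁ α₂ α₃ α₄ : ℝ}
    (hslope : 0 < sin α₁ * sin α₂ / (sin α₃ * sin α₄)) :
    StrictAntiOn (cosOppositeFold α₁ α₂ α₃ α₄) (Set.Icc 0 π) := by
  intro x hx y hy hxy
  have hcos : cos y < cos x := strictAntiOn_cos hx hy hxy
  rw [cosOppositeFold_eq_add_mul_cos, cosOppositeFold_eq_add_mul_cos]
  gcongr

theorem stmt12_general {α₁ α₂ α₃ α₄ : ℝ}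
    (hslope : 0 < sin α₁ * sin α₂ / (sin α₃ * sin α₄)) :
    StrictMonoOn (fun ρ ↦ arccos (cosOppositeFold α₁ α₂ α₃ α₄ ρ))
      {ρ ∈ Set.Icc 0 π | cosOppositeFold α₁ α₂ α₃ α₄ ρ ∈ Set.Icc (-1) 1} :=
  strictAntiOn_arccos.comp ((strictAntiOn_cosOppositeFold hslope).mono fun _ hρ ↦ hρ.1)
    fun _ hρ ↦ hρ.2

theorem stmt12 (α₁ α₂ α₃ α₄ : ℝ)
    (h₁ : α₁ ∈ Set.Ioo 0 π) (h₂ : α₂ ∈ Set.Ioo 0 π)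
    (h₃ : α₃ ∈ Set.Ioo 0 π) (h₄ : α₄ ∈ Set.Ioo 0 π) :
    ∀ a b : ℝ, Set.Icc a b ⊆ Set.Icc 0 π →
      (∀ ρ₁ ∈ Set.Icc a b,
        (Real.cos α₃ * Real.cos α₄ -
            Real.cos (Real.arccos
              (Real.cos α₁ * Real.cos α₂ - Real.sin α₁ * Real.sin α₂ * Real.cos ρ₁))) /
          (Real.sin α₃ * Real.sin α₄) ∈ Set.Icc (-1 : ℝ) 1) →
      StrictMonoOn
        (fun ρ₁ : ℝ =>
          Real.arccos ((Real.cos α₃ * Real.cos α₄ -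
              Real.cos (Real.arccos
                (Real.cos α₁ * Real.cos α₂ - Real.sin α₁ * Real.sin α₂ * Real.cos ρ₁))) /
            (Real.sin α₃ * Real.sin α₄)))
        (Set.Icc a b) := by
  intro a b hab harg
  have hslope : 0 < sin α₁ * sin α₂ / (sin α₃ * sin α₄) :=
    div_pos (mul_pos (sin_pos_of_mem_Ioo h₁) (sin_pos_of_mem_Ioo h₂))
      (mul_pos (sin_pos_of_mem_Ioo h₃) (sin_pos_of_mem_Ioo h₄))
  exact (stmt12_general hslope).mono fun ρ hρ ↦ ⟨hab hρ, harg ρ hρ⟩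
end

section
/- Let α₁, α₂, α₃, α₄ ∈ (0, π) with α₁ + α₂ + α₃ + α₄ = 2π, and let ρ₁ ∈ (0, π]. Set ξ = arccos(cos α₁ cos α₂ − sin α₁ sin α₂ cos ρ₁). Then (cos α₃ cos α₄ − cos ξ)/(sin α₃ sin α₄) < 1; consequently arccos((cos α₃ cos α₄ − cos ξ)/(sin α₃ sin α₄)) > 0, so the branch-1 value ρ₃ = arccos(...) and the branch-2 value ρ₃ = −arccos(...) of the folding angle ρ₃ differ for every ρ₁ ∈ (0, π]. -/
open Real

/-!
While the crease between the sectors `α₁` and `α₂` is unfolded, the angle `ξ` between their outer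
sides satisfies `cos ξ = cos (α₁ + α₂)`; folding it strictly increases `cos ξ`. By developability
`cos (α₃ + α₄) = cos (α₁ + α₂)`, so `cos (α₃ + α₄) < cos ξ`: the other two sectors span the same
angle `ξ` and cannot lie flat either, which by the spherical law of cosines means that the cosine
of the fold angle between them is less than `1`.
-/

/-- The angle between the outer sides of two adjacent sectors with angles `α` and `β` whose common
crease is folded by `ρ`. It is the `ξ` through which the fold angles of opposite creases determine
each other. The fold angle is measured from the flat state, so the dihedral angle is `π - ρ`, whence
the minus sign in the spherical law of cosines. -/
noncomputable def outerCreaseAngle (α β ρ : ℝ) : ℝ :=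
  arccos (cos α * cos β - sin α * sin β * cos ρ)

section Trigonometry

variable {α β γ δ ρ x : ℝ}

theorem cos_mul_cos_sub_sin_mul_sin_mul_mem_Icc (α β : ℝ) {t : ℝ} (ht : t ∈ Set.Icc (-1) 1) :
    cos α * cos β - sin α * sin β * t ∈ Set.Icc (-1) 1 := by
  have convex_combination : cos α * cos β - sin α * sin β * t =
      (1 + t) / 2 * cos (α + β) + (1 - t) / 2 * cos (α - β) := by
    rw [cos_add, cos_sub]
    ring
  rw [convex_combination]
  have ht₁ : 0 ≤ (1 + t) / 2 := by linarith [ht.1]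
  have ht₂ : 0 ≤ (1 - t) / 2 := by linarith [ht.2]
  exact convex_Icc (-1) 1 (cos_mem_Icc (α + β)) (cos_mem_Icc (α - β)) ht₁ ht₂ (by ring)

theorem cos_outerCreaseAngle (α β ρ : ℝ) :
    cos (outerCreaseAngle α β ρ) = cos α * cos β - sin α * sin β * cos ρ :=
  have bounds := cos_mul_cos_sub_sin_mul_sin_mul_mem_Icc α β (cos_mem_Icc ρ)
  cos_arccos bounds.1 bounds.2

theorem cos_add_lt_cos_outerCreaseAngle (hsin : 0 < sin α * sin β) (hρ : cos ρ ≠ 1) :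
    cos (α + β) < cos (outerCreaseAngle α β ρ) := by
  have hcos : cos ρ < 1 := (cos_le_one ρ).lt_of_ne hρ
  rw [cos_outerCreaseAngle, cos_add]
  exact sub_lt_sub_left (mul_lt_of_lt_one_right hsin hcos) _

theorem cos_mul_cos_sub_div_sin_mul_sin_lt_one_iff (hsin : 0 < sin α * sin β) :
    (cos α * cos β - x) / (sin α * sin β) < 1 ↔ cos (α + β) < x := by
  rw [div_lt_one hsin, cos_add, sub_lt_comm]

theorem arccos_ne_neg_arccos_iff : arccos x ≠ -arccos x ↔ x < 1 := by
  rw [Ne, self_eq_neg, arccos_eq_zero, not_le]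

theorem cos_add_eq_cos_add_of_sum_eq_two_pi (h : α + β + γ + δ = 2 * π) :
    cos (γ + δ) = cos (α + β) := by
  rw [← cos_two_pi_sub (α + β)]
  congr 1
  linarith

theorem cos_ne_one_of_pos_of_lt_two_pi (hρ₀ : 0 < ρ) (hρ : ρ < 2 * π) : cos ρ ≠ 1 := fun hcos ↦
  hρ₀.ne' ((cos_eq_one_iff_of_lt_of_lt (by linarith) hρ).1 hcos)

theorem sin_mul_sin_pos_of_mem_Ioo_s13 (hα : α ∈ Set.Ioo 0 π) (hβ : β ∈ Set.Ioo 0 π) :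
    0 < sin α * sin β :=
  mul_pos (sin_pos_of_mem_Ioo hα) (sin_pos_of_mem_Ioo hβ)

end Trigonometry

theorem stmt13_general {α₁ α₂ α₃ α₄ ρ₁ : ℝ}
    (h₁₂ : 0 < sin α₁ * sin α₂) (h₃₄ : 0 < sin α₃ * sin α₄)
    (hcos : cos (α₃ + α₄) ≤ cos (α₁ + α₂)) (hρ : cos ρ₁ ≠ 1) :
    let c₃ := (cos α₃ * cos α₄ - cos (outerCreaseAngle α₁ α₂ ρ₁)) / (sin α₃ * sin α₄)
    c₃ < 1 ∧ 0 < arccos c₃ ∧ arccos c₃ ≠ -arccos c₃ := by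
  intro c₃
  have hc₃ : c₃ < 1 := (cos_mul_cos_sub_div_sin_mul_sin_lt_one_iff h₃₄).2 <|
    hcos.trans_lt (cos_add_lt_cos_outerCreaseAngle h₁₂ hρ)
  exact ⟨hc₃, arccos_pos.2 hc₃, arccos_ne_neg_arccos_iff.2 hc₃⟩

theorem stmt13 (α₁ α₂ α₃ α₄ ρ₁ : ℝ)
    (h₁ : α₁ ∈ Set.Ioo 0 π) (h₂ : α₂ ∈ Set.Ioo 0 π)
    (h₃ : α₃ ∈ Set.Ioo 0 π) (h₄ : α₄ ∈ Set.Ioo 0 π)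
    (hdev : α₁ + α₂ + α₃ + α₄ = 2 * π)
    (hρ : ρ₁ ∈ Set.Ioc 0 π) :
    let ξ := Real.arccos (Real.cos α₁ * Real.cos α₂ - Real.sin α₁ * Real.sin α₂ * Real.cos ρ₁)
    (Real.cos α₃ * Real.cos α₄ - Real.cos ξ) / (Real.sin α₃ * Real.sin α₄) < 1 ∧
    0 < Real.arccos ((Real.cos α₃ * Real.cos α₄ - Real.cos ξ) / (Real.sin α₃ * Real.sin α₄)) ∧
    Real.arccos ((Real.cos α₃ * Real.cos α₄ - Real.cos ξ) / (Real.sin α₃ * Real.sin α₄)) ≠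
      -Real.arccos ((Real.cos α₃ * Real.cos α₄ - Real.cos ξ) / (Real.sin α₃ * Real.sin α₄)) :=
  stmt13_general (sin_mul_sin_pos_of_mem_Ioo_s13 h₁ h₂) (sin_mul_sin_pos_of_mem_Ioo_s13 h₃ h₄)
    (cos_add_eq_cos_add_of_sum_eq_two_pi hdev).le
    (cos_ne_one_of_pos_of_lt_two_pi hρ.1 (by linarith [hρ.1, hρ.2]))
end

section
/- Let α₁, α₂ ∈ (0, π), set α₃ = π − α₁ and α₄ = π − α₂ (the flat-foldable case), let ρ₁ ∈ (0, π), and set ξ = arccos(cos α₁ cos α₂ − sin α₁ sin α₂ cos ρ₁). Then the arccos arguments u = (cos α₂ cos ξ − cos α₁)/(sin α₂ sin ξ) and v = (cos α₁ cos ξ − cos α₂)/(sin α₁ sin ξ) lie in [−1, 1], and setting ρ₂ = arccos(u) − arccos(v) (the branch-1 formula of equation (2)), one has: tan(ρ₂/2) = (sin((α₂ − α₁)/2)/sin((α₂ + α₁)/2)) · tan(ρ₁/2); moreover the branch-1 formulas give ρ₃ = arccos((cos α₃ cos α₄ − cos ξ)/(sin α₃ sin α₄)) = ρ₁ and ρ₄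 = arccos(v) − arccos(u) = −ρ₂. -/
open Real

/-!
The sector angles `α₁`, `α₂` and the arc `ξ` are the sides of a spherical triangle whose angle
between `α₁` and `α₂` is `π - ρ₁`, because a fold angle is an exterior dihedral angle. By the
spherical law of cosines, `-u` and `-v` are the cosines of the angles `A`, `B` opposite `α₁`, `α₂`.
Hence `ρ₂ = (π - A) - (π - B) = B - A`, and the formula for `tan (ρ₂ / 2)` is Napier's analogy
`tan ((B - A) / 2) = sin ((α₂ - α₁) / 2) / sin ((α₂ + α₁) / 2) * cot ((π - ρ₁) / 2)`.
-/

section HalfAngle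

theorem tan_half_eq_sin_div_one_add_cos (x : ℝ) : tan (x / 2) = sin x / (1 + cos x) := by
  obtain ⟨y, rfl⟩ : ∃ y, x = 2 * y := ⟨x / 2, by ring⟩
  rw [mul_div_cancel_left₀ y two_ne_zero, tan_eq_sin_div_cos, sin_two_mul, cos_two_mul,
    add_sub_cancel, sq, ← mul_assoc]
  by_cases hy : cos y = 0
  · simp only [hy, mul_zero, div_zero]
  · rw [mul_div_mul_right _ _ hy, mul_div_mul_left _ _ two_ne_zero]

theorem sin_add_sin_eq_two_mul (x y : ℝ) :
    sin x + sin y = 2 * sin ((x + y) / 2) * cos ((x - y) / 2) := by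
  simpa [sub_neg_eq_add, ← sub_eq_add_neg] using sin_sub_sin x (-y)

variable {x y : ℝ}

theorem tan_half_sub (h : sin x + sin y ≠ 0) :
    tan ((x - y) / 2) = (cos y - cos x) / (sin x + sin y) := by
  have cos_sub : cos y - cos x = 2 * sin ((x + y) / 2) * sin ((x - y) / 2) := by
    linear_combination -cos_sub_cos x y
  rw [sin_add_sin_eq_two_mul] at h ⊢
  rw [cos_sub, mul_div_mul_left _ _ (left_ne_zero_of_mul h), tan_eq_sin_div_cos]

theorem sin_half_sub_div_sin_half_add (h : sin x + sin y ≠ 0) :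
    sin ((x - y) / 2) / sin ((x + y) / 2) = sin (x - y) / (sin x + sin y) := by
  have sin_sub : sin (x - y) = 2 * sin ((x - y) / 2) * cos ((x - y) / 2) := by
    rw [← sin_two_mul, mul_div_cancel₀ _ two_ne_zero]
  rw [sin_add_sin_eq_two_mul] at h ⊢
  rw [sin_sub, mul_div_mul_right _ _ (right_ne_zero_of_mul h), mul_div_mul_left _ _ two_ne_zero]

end HalfAngle

section SphericalTriangle

/-- The third side of a spherical triangle with sides `a`, `b` enclosing the angle `C`, given by
the spherical law of cosines. -/
noncomputable def sphericalSide (a b C : ℝ) : ℝ :=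
  arccos (cos a * cos b + sin a * sin b * cos C)

/-- The cosine of the angle opposite the side `a` in a spherical triangle with sides `a`, `b`, `c`,
given by the spherical law of cosines. -/
noncomputable def sphericalAngleCos (a b c : ℝ) : ℝ :=
  (cos a - cos b * cos c) / (sin b * sin c)

/-- The angle opposite the side `a` in a spherical triangle with sides `a`, `b`, `c`. -/
noncomputable def sphericalAngle (a b c : ℝ) : ℝ :=
  arccos (sphericalAngleCos a b c)

variable {a b C : ℝ}

theorem sphericalSide_comm (a b C : ℝ) : sphericalSide a b C = sphericalSide b a C := by
  simp only [sphericalSide, mul_comm]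

theorem one_sub_sq_law_of_cosines (a b C : ℝ) :
    1 - (cos a * cos b + sin a * sin b * cos C) ^ 2 =
      (cos a * sin b - sin a * cos b * cos C) ^ 2 + (sin a * sin C) ^ 2 := by
  linear_combination -sin_sq_add_cos_sq a -
    (cos a ^ 2 + sin a ^ 2 * cos C ^ 2) * sin_sq_add_cos_sq b - sin a ^ 2 * sin_sq_add_cos_sq C

theorem cos_sphericalSide (a b C : ℝ) :
    cos (sphericalSide a b C) = cos a * cos b + sin a * sin b * cos C := by
  have sq_le_one : (cos a * cos b + sin a * sin b * cos C) ^ 2 ≤ 1 := by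
    rw [← sub_nonneg, one_sub_sq_law_of_cosines]
    positivity
  have bounds := abs_le.1 ((sq_le_one_iff_abs_le_one _).1 sq_le_one)
  exact cos_arccos bounds.1 bounds.2

theorem sin_sphericalSide_sq (a b C : ℝ) :
    sin (sphericalSide a b C) ^ 2 =
      (cos a * sin b - sin a * cos b * cos C) ^ 2 + (sin a * sin C) ^ 2 := by
  rw [sin_sq, cos_sphericalSide, one_sub_sq_law_of_cosines]

theorem sin_sphericalSide_pos (ha : sin a ≠ 0) (hC : sin C ≠ 0) :
    0 < sin (sphericalSide a b C) := by
  have sin_nonneg : 0 ≤ sin (sphericalSide a b C) :=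
    sin_nonneg_of_nonneg_of_le_pi (arccos_nonneg _) (arccos_le_pi _)
  refine sin_nonneg.lt_of_ne' (sq_pos_iff.1 ?_)
  rw [sin_sphericalSide_sq]
  positivity

theorem sphericalAngleCos_sphericalSide_left (ha : sin a ≠ 0) (hb : sin b ≠ 0) :
    sphericalAngleCos (sphericalSide a b C) a b = cos C := by
  rw [sphericalAngleCos, cos_sphericalSide, add_sub_cancel_left,
    mul_div_cancel_left₀ _ (mul_ne_zero ha hb)]

theorem sphericalAngleCos_sphericalSide (hb : sin b ≠ 0) :
    sphericalAngleCos a b (sphericalSide a b C) =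
      (cos a * sin b - sin a * cos b * cos C) / sin (sphericalSide a b C) := by
  have numerator : cos a - cos b * (cos a * cos b + sin a * sin b * cos C) =
      sin b * (cos a * sin b - sin a * cos b * cos C) := by
    linear_combination -cos a * sin_sq_add_cos_sq b
  rw [sphericalAngleCos, cos_sphericalSide, numerator, mul_div_mul_left _ _ hb]

theorem one_sub_sphericalAngleCos_sq (ha : sin a ≠ 0) (hb : sin b ≠ 0) (hC : sin C ≠ 0) :
    1 - sphericalAngleCos a b (sphericalSide a b C) ^ 2 =
      (sin a * sin C / sin (sphericalSide a b C)) ^ 2 := by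
  have sin_ne : sin (sphericalSide a b C) ≠ 0 := (sin_sphericalSide_pos ha hC).ne'
  rw [sphericalAngleCos_sphericalSide hb, div_pow, div_pow, one_sub_div (pow_ne_zero 2 sin_ne),
    sin_sphericalSide_sq, add_sub_cancel_left]

theorem abs_sphericalAngleCos_le_one (ha : sin a ≠ 0) (hb : sin b ≠ 0) (hC : sin C ≠ 0) :
    |sphericalAngleCos a b (sphericalSide a b C)| ≤ 1 := by
  rw [← sq_le_one_iff_abs_le_one, ← sub_nonneg, one_sub_sphericalAngleCos_sq ha hb hC]
  positivity

theorem cos_sphericalAngle (ha : sin a ≠ 0) (hb : sin b ≠ 0) (hC : sin C ≠ 0) :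
    cos (sphericalAngle a b (sphericalSide a b C)) =
      (cos a * sin b - sin a * cos b * cos C) / sin (sphericalSide a b C) := by
  have bounds := abs_le.1 (abs_sphericalAngleCos_le_one ha hb hC)
  rw [sphericalAngle, cos_arccos bounds.1 bounds.2, sphericalAngleCos_sphericalSide hb]

theorem sin_sphericalAngle (ha : 0 < sin a) (hb : sin b ≠ 0) (hC : 0 < sin C) :
    sin (sphericalAngle a b (sphericalSide a b C)) =
      sin a * sin C / sin (sphericalSide a b C) := by
  have sin_pos : 0 < sin (sphericalSide a b C) := sin_sphericalSide_pos ha.ne' hC.ne'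
  rw [sphericalAngle, sin_arccos, one_sub_sphericalAngleCos_sq ha.ne' hb hC.ne',
    sqrt_sq (by positivity)]

/-- One of **Napier's analogies**. -/
theorem tan_half_sphericalAngle_sub_sphericalAngle
    (ha : 0 < sin a) (hb : 0 < sin b) (hC : 0 < sin C) :
    tan ((sphericalAngle a b (sphericalSide a b C) -
        sphericalAngle b a (sphericalSide a b C)) / 2) =
      sin ((a - b) / 2) / sin ((a + b) / 2) / tan (C / 2) := by
  set c := sphericalSide a b C
  have c_comm : c = sphericalSide b a C := sphericalSide_comm a b C
  have sin_c : 0 < sin c := sin_sphericalSide_pos ha.ne' hC.ne'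
  have sin_A : sin (sphericalAngle a b c) = sin a * sin C / sin c :=
    sin_sphericalAngle ha hb.ne' hC
  have sin_B : sin (sphericalAngle b a c) = sin b * sin C / sin c := by
    rw [c_comm, sin_sphericalAngle hb ha.ne' hC]
  have sin_add : sin (sphericalAngle a b c) + sin (sphericalAngle b a c) =
      (sin a + sin b) * sin C / sin c := by
    rw [sin_A, sin_B]; ring
  have cos_sub : cos (sphericalAngle b a c) - cos (sphericalAngle a b c) =
      sin (a - b) * (1 + cos C) / sin c := by
    rw [cos_sphericalAngle ha.ne' hb.ne' hC.ne', c_comm,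
      cos_sphericalAngle hb.ne' ha.ne' hC.ne', ← c_comm, sin_sub]
    ring
  have sum_ne : sin (sphericalAngle a b c) + sin (sphericalAngle b a c) ≠ 0 := by
    rw [sin_add]; positivity
  calc tan ((sphericalAngle a b c - sphericalAngle b a c) / 2)
      = sin (a - b) * (1 + cos C) / ((sin a + sin b) * sin C) := by
        rw [tan_half_sub sum_ne, cos_sub, sin_add, div_div_div_cancel_right₀ sin_c.ne']
    _ = sin ((a - b) / 2) / sin ((a + b) / 2) / tan (C / 2) := by
        rw [sin_half_sub_div_sin_half_add (add_pos ha hb).ne', tan_half_eq_sin_div_one_add_cos,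
          div_div_div_eq]

end SphericalTriangle

theorem stmt14 (α₁ α₂ ρ₁ : ℝ)
    (h₁ : α₁ ∈ Set.Ioo 0 π) (h₂ : α₂ ∈ Set.Ioo 0 π) (hρ : ρ₁ ∈ Set.Ioo 0 π) :
    let α₃ := π - α₁
    let α₄ := π - α₂
    let ξ := Real.arccos (Real.cos α₁ * Real.cos α₂ - Real.sin α₁ * Real.sin α₂ * Real.cos ρ₁)
    let u := (Real.cos α₂ * Real.cos ξ - Real.cos α₁) / (Real.sin α₂ * Real.sin ξ)
    let v := (Real.cos α₁ * Real.cos ξ - Real.cos α₂) / (Real.sin α₁ * Real.sin ξ)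
    let ρ₂ := Real.arccos u - Real.arccos v
    u ∈ Set.Icc (-1 : ℝ) 1 ∧ v ∈ Set.Icc (-1 : ℝ) 1 ∧
    Real.tan (ρ₂ / 2) =
      (Real.sin ((α₂ - α₁) / 2) / Real.sin ((α₂ + α₁) / 2)) * Real.tan (ρ₁ / 2) ∧
    Real.arccos ((Real.cos α₃ * Real.cos α₄ - Real.cos ξ) / (Real.sin α₃ * Real.sin α₄)) = ρ₁ ∧
    Real.arccos v - Real.arccos u = -ρ₂ := by
  intro α₃ α₄ ξ u v ρ₂
  have sin_α₁ : 0 < sin α₁ := sin_pos_of_mem_Ioo h₁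
  have sin_α₂ : 0 < sin α₂ := sin_pos_of_mem_Ioo h₂
  have sin_C : 0 < sin (π - ρ₁) := by rw [sin_pi_sub]; exact sin_pos_of_mem_Ioo hρ
  have hξ : ξ = sphericalSide α₁ α₂ (π - ρ₁) := by
    rw [sphericalSide, cos_pi_sub, mul_neg, ← sub_eq_add_neg]
  have hξ' : ξ = sphericalSide α₂ α₁ (π - ρ₁) := hξ.trans (sphericalSide_comm ..)
  have hu : u = -sphericalAngleCos α₁ α₂ ξ := by rw [sphericalAngleCos, ← neg_div, neg_sub]
  have hv : v = -sphericalAngleCos α₂ α₁ ξ := by rw [sphericalAngleCos, ← neg_div, neg_sub]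
  have hρ₂ : ρ₂ = sphericalAngle α₂ α₁ ξ - sphericalAngle α₁ α₂ ξ := by
    simp only [ρ₂, hu, hv, arccos_neg, sphericalAngle, sub_sub_sub_cancel_left]
  refine ⟨abs_le.1 ?_, abs_le.1 ?_, ?_, ?_, (neg_sub _ _).symm⟩
  · rw [hu, abs_neg, hξ]
    exact abs_sphericalAngleCos_le_one sin_α₁.ne' sin_α₂.ne' sin_C.ne'
  · rw [hv, abs_neg, hξ']
    exact abs_sphericalAngleCos_le_one sin_α₂.ne' sin_α₁.ne' sin_C.ne'
  · rw [hρ₂, hξ', tan_half_sphericalAngle_sub_sphericalAngle sin_α₂ sin_α₁ sin_C,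
      sub_div π, tan_pi_div_two_sub, div_inv_eq_mul]
  · have cos_ρ₁ : (cos α₃ * cos α₄ - cos ξ) / (sin α₃ * sin α₄) = cos ρ₁ := by
      rw [cos_pi_sub, cos_pi_sub, sin_pi_sub, sin_pi_sub, neg_mul_neg, ← neg_sub, neg_div,
        ← sphericalAngleCos, hξ, sphericalAngleCos_sphericalSide_left sin_α₁.ne' sin_α₂.ne',
        cos_pi_sub, neg_neg]
    rw [cos_ρ₁, arccos_cos hρ.1.le hρ.2.le]
end
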